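/- arXiv:2506.22961 — 2 statements merged into one kernel-verified Lean document; each statement's English description precedes it below -/
import Mathlib

section
/- Let m be a natural number and let M be any 2^m × 2^m complex matrix with rows and columns indexed by {0,1}^m. Then (1/2^{2m}) · Σ_{a,b ∈ {0,1}^m} U_{a,b} M U_{a,b}† = (Tr M / 2^m) · I, where I is the 2^m × 2^m identity matrix. (This is the general, mixed-state form of the quantum one-time pad lemma, used to argue that one-time-pad encryptions of arbitrary quantum states are maximally mixed.) -/
open scoped BigOperators
open Matrix

/-- The `m`-qubit Pauli operator `X^a Z^b` implementing the quantum one-time pad: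
its `(x, y)` entry is `(-1)^(b·y)` if `x = y ⊕ a` and `0` otherwise. -/
noncomputable def pauliU (m : ℕ) (a b : Fin m → ZMod 2) :
    Matrix (Fin m → ZMod 2) (Fin m → ZMod 2) ℂ :=
  fun x y => if x = y + a then (-1 : ℂ) ^ ((∑ i, b i * y i : ZMod 2)).val else 0

/-!
Summing `U M U†` over all phases at a fixed shift `a` multiplies the entry `M (x - a) (z - a)` by
`∑ χ, χ (x - z)`, so character orthogonality erases everything off the diagonal; summing over
the shifts then spreads the surviving diagonal uniformly. This works for any finite abelian group
in place of `{0,1}^m`, and the keys `b` enumerate the characters `y ↦ (-1)^(b·y)` of `{0,1}^m`.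
-/

theorem sum_diagonal_sub {G α : Type*} [AddGroup G] [Fintype G] [DecidableEq G]
    [NonAssocSemiring α] (M : Matrix G G α) :
    ∑ a : G, diagonal (fun x => M (x - a) (x - a)) = M.trace • (1 : Matrix G G α) := by
  have diag_sum (x : G) : ∑ a, M (x - a) (x - a) = M.trace :=
    (Equiv.subLeft x).sum_comp fun y => M y y
  ext x z
  obtain rfl | hxz := eq_or_ne x z
  · simp [Matrix.sum_apply, diag_sum]
  · simp [Matrix.sum_apply, hxz]

section WeylOperator

variable {G 𝕜 : Type*} [AddCommGroup G] [DecidableEq G]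

/-- The generalized Pauli (Weyl) operator `X^a Z^χ` of an abelian group: multiplication by the
character `χ` followed by translation by `a`. The `Z` keys are taken to be characters, so that no
identification of `G` with its dual is chosen. -/
def weylOperator [MonoidWithZero 𝕜] (a : G) (χ : AddChar G 𝕜) : Matrix G G 𝕜 :=
  of fun x y => if x = y + a then χ y else 0

theorem weylOperator_apply [MonoidWithZero 𝕜] (a : G) (χ : AddChar G 𝕜) (x y : G) :
    weylOperator a χ x y = if y = x - a then χ y else 0 := by
  simp only [weylOperator, of_apply, eq_sub_iff_add_eq, eq_comm]

variable [Fintype G]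

theorem weylOperator_mul_mul_conjTranspose_apply [RCLike 𝕜] (a : G) (χ : AddChar G 𝕜)
    (M : Matrix G G 𝕜) (x z : G) :
    (weylOperator a χ * M * (weylOperator a χ)ᴴ) x z = χ (x - z) * M (x - a) (z - a) := by
  have phase : χ (x - z) = χ (x - a) * star (χ (z - a)) := by
    rw [← starRingEnd_apply, ← AddChar.map_neg_eq_conj, ← AddChar.map_add_eq_mul]
    congr 1
    abel
  simp only [mul_apply, conjTranspose_apply, weylOperator_apply, apply_ite star, star_zero,
    ite_mul, mul_ite, zero_mul, mul_zero, Finset.sum_ite_eq', Finset.mem_univ, if_true, phase]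
  ring

theorem sum_addChar_weylOperator_mul_mul_conjTranspose (a : G) (M : Matrix G G ℂ) :
    ∑ χ : AddChar G ℂ, weylOperator a χ * M * (weylOperator a χ)ᴴ =
      (Fintype.card G : ℂ) • diagonal fun x => M (x - a) (x - a) := by
  ext x z
  simp only [Matrix.sum_apply, weylOperator_mul_mul_conjTranspose_apply, ← Finset.sum_mul,
    AddChar.sum_apply_eq_ite, sub_eq_zero, Matrix.smul_apply, smul_eq_mul]
  obtain rfl | hxz := eq_or_ne x z
  · simp
  · simp [hxz]

theorem qotp_maximally_mixed_general (M : Matrix G G ℂ) :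
    (1 / (Fintype.card G : ℂ) ^ 2) •
      ∑ a : G, ∑ χ : AddChar G ℂ, weylOperator a χ * M * (weylOperator a χ)ᴴ
      = (M.trace / Fintype.card G) • (1 : Matrix G G ℂ) := by
  have card_ne_zero : (Fintype.card G : ℂ) ≠ 0 := Nat.cast_ne_zero.mpr Fintype.card_ne_zero
  simp_rw [sum_addChar_weylOperator_mul_mul_conjTranspose, ← Finset.smul_sum,
    sum_diagonal_sub, smul_smul]
  congr 1
  field_simp

end WeylOperator

section DotProductChar

variable {ι R S : Type*} [Fintype ι] [CommRing R] [CommMonoid S]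

/-- The character `v ↦ ψ (b ⬝ᵥ v)` of `ι → R`, by which a key vector `b` labels a `Z` operator. -/
def dotProductChar (ψ : AddChar R S) (b : ι → R) :
    AddChar (ι → R) S :=
  ψ.compAddMonoidHom (dotProductBilin R R b).toAddMonoidHom

theorem dotProductChar_apply (ψ : AddChar R S) (b v : ι → R) :
    dotProductChar ψ b v = ψ (b ⬝ᵥ v) := rfl

theorem dotProductChar_injective {ψ : AddChar R S} (hψ : ψ.IsPrimitive) :
    Function.Injective (dotProductChar (ι := ι) ψ) := by
  classical
  intro b c hbc
  funext i
  apply AddChar.to_mulShift_inj_of_isPrimitive hψ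
  ext r
  simpa [dotProductChar_apply] using DFunLike.congr_fun hbc (Pi.single i r)

theorem dotProductChar_bijective [Finite R] {ψ : AddChar R ℂ} (hψ : ψ.IsPrimitive) :
    Function.Bijective (dotProductChar (ι := ι) ψ) := by
  classical
  have := Fintype.ofFinite R
  exact (Fintype.bijective_iff_injective_and_card _).mpr
    ⟨dotProductChar_injective hψ, AddChar.card_eq.symm⟩

end DotProductChar

/-- The sign character `s ↦ (-1)^s` of `ZMod 2`, from which the phases of `Z^b` are built. -/
noncomputable def signChar : AddChar (ZMod 2) ℂ :=
  AddChar.zmodChar 2 (neg_one_sq (R := ℂ))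

theorem signChar_isPrimitive : signChar.IsPrimitive :=
  AddChar.zmodChar_primitive_of_primitive_root 2 (IsPrimitiveRoot.neg_one 0 two_ne_zero.symm)

theorem pauliU_eq_weylOperator (m : ℕ) (a b : Fin m → ZMod 2) :
    pauliU m a b = weylOperator a (dotProductChar signChar b) := rfl

theorem sum_pauliU_mul_mul_conjTranspose (m : ℕ) (a : Fin m → ZMod 2)
    (M : Matrix (Fin m → ZMod 2) (Fin m → ZMod 2) ℂ) :
    ∑ b : Fin m → ZMod 2, pauliU m a b * M * (pauliU m a b)ᴴ =
      ∑ χ : AddChar (Fin m → ZMod 2) ℂ, weylOperator a χ * M * (weylOperator a χ)ᴴ := by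
  simp only [pauliU_eq_weylOperator]
  exact (dotProductChar_bijective signChar_isPrimitive).sum_comp
    fun χ => weylOperator a χ * M * (weylOperator a χ)ᴴ

/-- General (mixed-state) form of the quantum one-time pad lemma: averaging the
one-time pad encryption of an arbitrary matrix `M` over all keys yields
`(Tr M / 2^m) · I`. -/
theorem qotp_maximally_mixed (m : ℕ)
    (M : Matrix (Fin m → ZMod 2) (Fin m → ZMod 2) ℂ) :
    (1 / 2 ^ (2 * m) : ℂ) •
      ∑ a : Fin m → ZMod 2, ∑ b : Fin m → ZMod 2,
        pauliU m a b * M * (pauliU m a b)ᴴ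
      = (M.trace / 2 ^ m) • (1 : Matrix (Fin m → ZMod 2) (Fin m → ZMod 2) ℂ) := by
  simp_rw [sum_pauliU_mul_mul_conjTranspose]
  simpa [pow_mul'] using qotp_maximally_mixed_general M
end

section
/- Soundness of the Hamiltonian verification test: Let N and J be finite types, d : J → ℝ, and S : J → Matrix N N ℂ with each S_j Hermitian. Set Σ = Σ_{j ∈ J} |d_j|, assume Σ > 0, let H = Σ_{j ∈ J} d_j · S_j and p_j = |d_j|/Σ. Let b ∈ ℝ and assume H − b·I is positive semidefinite (i.e., every eigenvalue of H is at least b). Then for every density matrix ρ (a Hermitian positive semidefinite N × N complex matrix with Tr ρ = 1), the acceptance probability satisfies Σ_{j ∈ J} p_j · Tr[((I − sign(d_j) · S_j)/2) · ρ] ≤ 1/2 − b/(2Σ). -/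
open scoped BigOperators ComplexOrder

/-!
Since `|d j| * sign (d j) = d j`, averaging the accepting effects `(I - sign (d j) S j) / 2` with
weights `|d j| / Σ` produces the single effect `(I - H / Σ) / 2`. The acceptance probability is
therefore `1/2 - Tr (H ρ) / (2 Σ)`, and `H ≥ b I` forces `Tr (H ρ) ≥ b`.
-/

theorem abs_mul_real_sign (x : ℝ) : |x| * Real.sign x = x := by
  obtain h | rfl | h := lt_trichotomy x 0
  · rw [abs_of_neg h, Real.sign_of_neg h, neg_mul_neg, mul_one]
  · rw [Real.sign_zero, mul_zero]
  · rw [abs_of_pos h, Real.sign_of_pos h, mul_one]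

section HamiltonianTest

variable {N J 𝕜 : Type*} [Fintype N] [RCLike 𝕜]

open scoped MatrixOrder in
theorem trace_mul_nonneg_of_posSemidef {A B : Matrix N N 𝕜} (hA : A.PosSemidef)
    (hB : B.PosSemidef) : 0 ≤ (A * B).trace := by
  classical
  obtain ⟨C, rfl⟩ := CStarAlgebra.nonneg_iff_eq_star_mul_self.mp hB.nonneg
  calc 0 ≤ (C * A * star C).trace := (hA.mul_mul_conjTranspose_same C).trace_nonneg
    _ = (A * (star C * C)).trace := by
      rw [Matrix.mul_assoc, Matrix.trace_mul_comm, Matrix.mul_assoc]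

theorem re_trace_sum_smul_mul (s : Finset J) (d : J → ℝ) (S : J → Matrix N N 𝕜)
    (ρ : Matrix N N 𝕜) :
    RCLike.re ((∑ j ∈ s, (d j : 𝕜) • S j) * ρ).trace =
      ∑ j ∈ s, d j * RCLike.re (S j * ρ).trace := by
  simp only [Matrix.sum_mul, Matrix.trace_sum, map_sum, Matrix.smul_mul, Matrix.trace_smul,
    smul_eq_mul, RCLike.re_ofReal_mul]

variable [DecidableEq N]

theorem mul_re_trace_le_re_trace_mul {A ρ : Matrix N N 𝕜} {b : ℝ}
    (hA : (A - (b : 𝕜) • (1 : Matrix N N 𝕜)).PosSemidef) (hρ : ρ.PosSemidef) :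
    b * RCLike.re ρ.trace ≤ RCLike.re (A * ρ).trace := by
  have h := (RCLike.nonneg_iff.mp (trace_mul_nonneg_of_posSemidef hA hρ)).1
  rwa [Matrix.sub_mul, Matrix.smul_mul, Matrix.one_mul, Matrix.trace_sub, Matrix.trace_smul,
    smul_eq_mul, map_sub, RCLike.re_ofReal_mul, sub_nonneg] at h

/-- The effect `(I - sign x · A) / 2` of the outcome `-sign x` of the two-outcome measurement
`{(I + A) / 2, (I - A) / 2}`, on which the verification test accepts a term `x • A`. -/
noncomputable def acceptEffect (x : ℝ) (A : Matrix N N 𝕜) : Matrix N N 𝕜 :=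
  (2 : 𝕜)⁻¹ • (1 - (Real.sign x : 𝕜) • A)

theorem re_trace_acceptEffect_mul (x : ℝ) (A ρ : Matrix N N 𝕜) :
    RCLike.re (acceptEffect x A * ρ).trace =
      (RCLike.re ρ.trace - Real.sign x * RCLike.re (A * ρ).trace) / 2 := by
  have two_inv : (2 : 𝕜)⁻¹ = ((2⁻¹ : ℝ) : 𝕜) := by push_cast; rfl
  rw [acceptEffect, two_inv, Matrix.smul_mul, Matrix.sub_mul, Matrix.one_mul, Matrix.smul_mul,
    Matrix.trace_smul, Matrix.trace_sub, Matrix.trace_smul, smul_eq_mul, smul_eq_mul,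
    RCLike.re_ofReal_mul, map_sub, RCLike.re_ofReal_mul, inv_mul_eq_div]

theorem abs_mul_re_trace_acceptEffect_mul (x : ℝ) (A ρ : Matrix N N 𝕜) :
    |x| * RCLike.re (acceptEffect x A * ρ).trace =
      (|x| * RCLike.re ρ.trace - x * RCLike.re (A * ρ).trace) / 2 := by
  rw [re_trace_acceptEffect_mul]
  linear_combination -(RCLike.re (A * ρ).trace / 2) * abs_mul_real_sign x

variable [Fintype J]

/-- The probability that the verification test for `∑ j, d j • S j` accepts `ρ`, the term `j` being
sampled with probability `|d j| / ∑ j', |d j'|`. It is a real number because only the real part of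
each trace is taken; on Hermitian `S j` and `ρ` the traces are real. -/
noncomputable def acceptanceProb (d : J → ℝ) (S : J → Matrix N N 𝕜) (ρ : Matrix N N 𝕜) : ℝ :=
  ∑ j, (|d j| / ∑ j', |d j'|) * RCLike.re (acceptEffect (d j) (S j) * ρ).trace

theorem acceptanceProb_eq {d : J → ℝ} (hd : ∑ j, |d j| ≠ 0) (S : J → Matrix N N 𝕜)
    {ρ : Matrix N N 𝕜} (hρtr : ρ.trace = 1) :
    acceptanceProb d S ρ =
      1 / 2 - RCLike.re ((∑ j, (d j : 𝕜) • S j) * ρ).trace / (2 * ∑ j, |d j|) := by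
  calc acceptanceProb d S ρ
      = (∑ j, |d j| * RCLike.re (acceptEffect (d j) (S j) * ρ).trace) / ∑ j, |d j| := by
        simp only [acceptanceProb, div_mul_eq_mul_div, Finset.sum_div]
    _ = (∑ j, |d j| - ∑ j, d j * RCLike.re (S j * ρ).trace) / 2 / ∑ j, |d j| := by
        simp only [abs_mul_re_trace_acceptEffect_mul, hρtr, RCLike.one_re, mul_one,
          ← Finset.sum_div, Finset.sum_sub_distrib]
    _ = 1 / 2 - RCLike.re ((∑ j, (d j : 𝕜) • S j) * ρ).trace / (2 * ∑ j, |d j|) := by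
        rw [re_trace_sum_smul_mul]
        field_simp

theorem hamiltonian_test_soundness_general {d : J → ℝ} {S : J → Matrix N N 𝕜}
    (hd : 0 < ∑ j, |d j|) {b : ℝ}
    (hb : ((∑ j, (d j : 𝕜) • S j) - (b : 𝕜) • (1 : Matrix N N 𝕜)).PosSemidef)
    {ρ : Matrix N N 𝕜} (hρ : ρ.PosSemidef) (hρtr : ρ.trace = 1) :
    acceptanceProb d S ρ ≤ 1 / 2 - b / (2 * ∑ j, |d j|) := by
  have energy_ge : b ≤ RCLike.re ((∑ j, (d j : 𝕜) • S j) * ρ).trace := by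
    simpa only [hρtr, RCLike.one_re, mul_one] using mul_re_trace_le_re_trace_mul hb hρ
  rw [acceptanceProb_eq hd.ne' S hρtr]
  gcongr

end HamiltonianTest

/-- Soundness of the Hamiltonian verification test: if every eigenvalue of
`H = ∑_j d_j S_j` is at least `b` (i.e. `H - b·I` is positive semidefinite),
then on any density matrix `ρ` the test accepts with probability at most
`1/2 - b/(2Σ)`. -/
theorem hamiltonian_test_soundness
    {N J : Type*} [Fintype N] [Fintype J] [DecidableEq N]
    (d : J → ℝ) (S : J → Matrix N N ℂ)
    (hHerm : ∀ j, (S j).IsHermitian)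
    (hpos : 0 < ∑ j, |d j|)
    (b : ℝ)
    (hb : ((∑ j, (d j : ℂ) • S j) - (b : ℂ) • (1 : Matrix N N ℂ)).PosSemidef)
    (ρ : Matrix N N ℂ) (hρ : ρ.PosSemidef) (hρtr : ρ.trace = 1) :
    ∑ j, (|d j| / ∑ j', |d j'|) *
        ((((2 : ℂ)⁻¹ • ((1 : Matrix N N ℂ) - (Real.sign (d j) : ℂ) • S j)) * ρ).trace).re
      ≤ 1 / 2 - b / (2 * ∑ j, |d j|) :=
  hamiltonian_test_soundness_general hpos hb hρ hρtr
end
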